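/- Let u : ℝ² → ℝ be a bounded C² solution of Δu = F'(u) with |u| ≤ 1, and suppose F ≥ 0 on [-1,1]. Then the Modica gradient estimate holds: |∇u(x,y)|² ≤ 2 F(u(x,y)) for all (x,y) ∈ ℝ². -/

import Mathlib

open Real

structure C2data (U a b r s t : ℝ → ℝ → ℝ) : Prop where
  Ux : ∀ x y, HasDerivAt (fun x => U x y) (a x y) x
  Uy : ∀ x y, HasDerivAt (fun y => U x y) (b x y) y
  ax : ∀ x y, HasDerivAt (fun x => a x y) (r x y) x
  ay : ∀ x y, HasDerivAt (fun y => a x y) (s x y) y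
  bx : ∀ x y, HasDerivAt (fun x => b x y) (s x y) x
  by' : ∀ x y, HasDerivAt (fun y => b x y) (t x y) y
  cU : Continuous (fun p : ℝ × ℝ => U p.1 p.2)
  ca : Continuous (fun p : ℝ × ℝ => a p.1 p.2)
  cb : Continuous (fun p : ℝ × ℝ => b p.1 p.2)
  cr : Continuous (fun p : ℝ × ℝ => r p.1 p.2)
  cs : Continuous (fun p : ℝ × ℝ => s p.1 p.2)
  ct : Continuous (fun p : ℝ × ℝ => t p.1 p.2)

theorem C2data.swap {U a b r s t : ℝ → ℝ → ℝ} (D : C2data U a b r s t) :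
    C2data (fun x y => U y x) (fun x y => b y x) (fun x y => a y x)
      (fun x y => t y x) (fun x y => s y x) (fun x y => r y x) where
  Ux x y := D.Uy y x
  Uy x y := D.Ux y x
  ax x y := D.by' y x
  ay x y := D.bx y x
  bx x y := D.ay y x
  by' x y := D.ax y x
  cU := D.cU.comp continuous_swap
  ca := D.cb.comp continuous_swap
  cb := D.ca.comp continuous_swap
  cr := D.ct.comp continuous_swap
  cs := D.cs.comp continuous_swap
  ct := D.cr.comp continuous_swap

theorem C2data.neg {U a b r s t : ℝ → ℝ → ℝ} (D : C2data U a b r s t) :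
    C2data (fun x y => -U x y) (fun x y => -a x y) (fun x y => -b x y)
      (fun x y => -r x y) (fun x y => -s x y) (fun x y => -t x y) where
  Ux x y := (D.Ux x y).neg
  Uy x y := (D.Uy x y).neg
  ax x y := (D.ax x y).neg
  ay x y := (D.ay x y).neg
  bx x y := (D.bx x y).neg
  by' x y := (D.by' x y).neg
  cU := D.cU.neg
  ca := D.ca.neg
  cb := D.cb.neg
  cr := D.cr.neg
  cs := D.cs.neg
  ct := D.ct.neg

theorem max2 {φ φ' : ℝ → ℝ} {c t : ℝ} (h1 : ∀ s, HasDerivAt φ (φ' s) s)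
    (h2 : HasDerivAt φ' c t) (hm : IsLocalMax φ t) : φ' t = 0 ∧ c ≤ 0 := by
  have h0 : φ' t = 0 := hm.hasDerivAt_eq_zero (h1 t)
  refine ⟨h0, ?_⟩
  by_contra! hc
  have e : deriv φ = φ' := funext fun s => (h1 s).deriv
  have hmin : IsLocalMin φ t := by
    apply isLocalMin_of_deriv_deriv_pos
    · rw [e, h2.deriv]; exact hc
    · rw [e, h0]
    · exact (h1 t).continuousAt
  have hconst : φ =ᶠ[nhds t] fun _ => φ t := by
    filter_upwards [hm, hmin] with s h1 h2 using le_antisymm h1 h2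
  have h3 : φ' =ᶠ[nhds t] fun _ => 0 := by
    have := hconst.deriv
    rw [e] at this
    simpa using this
  have := h3.deriv_eq
  rw [h2.deriv] at this
  simp at this
  linarith

theorem grad_bound1 {U a b r s t : ℝ → ℝ → ℝ} (D : C2data U a b r s t)
    (hU : ∀ x y, |U x y| ≤ 1) {N : ℝ} (hN : ∀ x y, |r x y + t x y| ≤ N) (x y : ℝ) :
    b x y ≤ 2 + (N + 1) / 2 := by
  have hN0 : 0 ≤ N := (abs_nonneg _).trans (hN 0 0)
  set w : ℝ → ℝ → ℝ := fun ξ η => (U (x + ξ) (y + η) - U (x + ξ) (y - η)) / 2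
    - (ξ ^ 2 + η * (2 - η) + (N + 1) / 2 * (η * (1 - η))) with hw
  have hwx : ∀ ξ η, HasDerivAt (fun ξ => w ξ η)
      ((a (x + ξ) (y + η) - a (x + ξ) (y - η)) / 2 - 2 * ξ) ξ := by
    intro ξ η
    have h1 := (D.Ux (x + ξ) (y + η)).comp_const_add x ξ
    have h2 := (D.Ux (x + ξ) (y - η)).comp_const_add x ξ
    have h3 := (((hasDerivAt_pow 2 ξ).add_const (η * (2 - η))).add_const
      ((N + 1) / 2 * (η * (1 - η))))
    refine HasDerivAt.congr_deriv (((h1.sub h2).div_const 2).sub h3) ?_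
    simp
  have hwxx : ∀ ξ η, HasDerivAt (fun ξ => (a (x + ξ) (y + η) - a (x + ξ) (y - η)) / 2 - 2 * ξ)
      ((r (x + ξ) (y + η) - r (x + ξ) (y - η)) / 2 - 2) ξ := by
    intro ξ η
    have h1 := (D.ax (x + ξ) (y + η)).comp_const_add x ξ
    have h2 := (D.ax (x + ξ) (y - η)).comp_const_add x ξ
    have h3 := (hasDerivAt_id ξ).const_mul (2 : ℝ)
    refine HasDerivAt.congr_deriv (((h1.sub h2).div_const 2).sub h3) ?_
    simp
  have hwy : ∀ ξ η, HasDerivAt (fun η => w ξ η)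
      ((b (x + ξ) (y + η) + b (x + ξ) (y - η)) / 2 - ((2 - 2 * η) + (N + 1) / 2 * (1 - 2 * η))) η := by
    intro ξ η
    have h1 := (D.Uy (x + ξ) (y + η)).comp_const_add y η
    have h2 := (D.Uy (x + ξ) (y - η)).comp_const_sub y η
    have i := hasDerivAt_id η
    have h3 := ((i.mul (i.const_sub 2)).const_add (ξ ^ 2)).add ((i.mul (i.const_sub 1)).const_mul ((N + 1) / 2))
    refine HasDerivAt.congr_deriv (((h1.sub h2).div_const 2).sub h3) ?_
    simp; ring
  have hwyy : ∀ ξ η, HasDerivAt (fun η => (b (x + ξ) (y + η) + b (x + ξ) (y - η)) / 2 - ((2 - 2 * η) + (N + 1) / 2 * (1 - 2 * η)))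
      ((t (x + ξ) (y + η) - t (x + ξ) (y - η)) / 2 + 2 + (N + 1)) η := by
    intro ξ η
    have h1 := (D.by' (x + ξ) (y + η)).comp_const_add y η
    have h2 := (D.by' (x + ξ) (y - η)).comp_const_sub y η
    have i := hasDerivAt_id η
    have h3 := ((i.const_mul (2:ℝ)).const_sub 2).add (((i.const_mul (2:ℝ)).const_sub 1).const_mul ((N + 1) / 2))
    refine HasDerivAt.congr_deriv (((h1.add h2).div_const 2).sub h3) ?_
    simp; ring
  have hcont : Continuous (fun p : ℝ × ℝ => w p.1 p.2) := by
    have c1 : Continuous (fun p : ℝ × ℝ => U (x + p.1) (y + p.2)) :=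
      D.cU.comp (f := fun p : ℝ × ℝ => (x + p.1, y + p.2)) (by fun_prop)
    have c2 : Continuous (fun p : ℝ × ℝ => U (x + p.1) (y - p.2)) :=
      D.cU.comp (f := fun p : ℝ × ℝ => (x + p.1, y - p.2)) (by fun_prop)
    exact ((c1.sub c2).div_const 2).sub (by fun_prop)
  have hK : IsCompact (Set.Icc (-1 : ℝ) 1 ×ˢ Set.Icc (0 : ℝ) 1) := isCompact_Icc.prod isCompact_Icc
  obtain ⟨⟨ξ, η⟩, hm, hmax⟩ := hK.exists_isMaxOn ⟨(0, 0), by simp⟩ hcont.continuousOn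
  have hmax' : ∀ ξ' ∈ Set.Icc (-1 : ℝ) 1, ∀ η' ∈ Set.Icc (0 : ℝ) 1, w ξ' η' ≤ w ξ η := by
    intro ξ' h1 η' h2
    exact hmax (Set.mk_mem_prod h1 h2)
  obtain ⟨⟨hξ1, hξ2⟩, hη1, hη2⟩ := hm
  simp only at hξ1 hξ2 hη1 hη2
  have hφ : (U (x + ξ) (y + η) - U (x + ξ) (y - η)) / 2 ≤ 1 := by
    have := abs_le.1 (hU (x + ξ) (y + η))
    have := abs_le.1 (hU (x + ξ) (y - η))
    linarith
  have hneg : w ξ η ≤ 0 := by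
    rcases hη1.eq_or_lt with h | h
    · subst h
      simp only [hw, add_zero, sub_zero, sub_self]
      nlinarith [sq_nonneg ξ]
    have q1 : 0 ≤ (N + 1) / 2 * (η * (1 - η)) :=
      mul_nonneg (by linarith) (mul_nonneg hη1 (by linarith))
    rcases hη2.eq_or_lt with h' | h'
    · subst h'
      simp only [hw]
      nlinarith [sq_nonneg ξ]
    have q2 : 0 ≤ η * (2 - η) := mul_nonneg hη1 (by linarith)
    rcases hξ1.eq_or_lt with h2 | h2
    · subst h2
      simp only [hw]
      nlinarith
    rcases hξ2.eq_or_lt with h3 | h3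
    · subst h3
      simp only [hw]
      nlinarith
    exfalso
    have m1 : IsLocalMax (fun ξ => w ξ η) ξ := by
      filter_upwards [Icc_mem_nhds h2 h3] with ξ' h using hmax' ξ' h η ⟨hη1, hη2⟩
    have m2 : IsLocalMax (fun η => w ξ η) η := by
      filter_upwards [Icc_mem_nhds h h'] with ξ' h using hmax' ξ ⟨hξ1, hξ2⟩ ξ' h
    have k1 := (max2 (fun ξ => hwx ξ η) (hwxx ξ η) m1).2
    have k2 := (max2 (fun η => hwy ξ η) (hwyy ξ η) m2).2
    have := abs_le.1 (hN (x + ξ) (y + η))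
    have := abs_le.1 (hN (x + ξ) (y - η))
    linarith
  have hle : ∀ η' ∈ Set.Icc (0 : ℝ) 1, w 0 η' ≤ 0 := fun η' h =>
    (hmax' 0 (by simp) η' h).trans hneg
  by_contra! hb
  have hd := hwy 0 0
  have hpos : 0 < ((b (x + 0) (y + 0) + b (x + 0) (y - 0)) / 2 - ((2 - 2 * 0) + (N + 1) / 2 * (1 - 2 * 0))) := by
    simp only [add_zero, sub_zero]
    linarith
  have hsl := (hasDerivAt_iff_tendsto_slope.1 hd).eventually (eventually_gt_nhds hpos)
  have hsl2 : ∀ᶠ η in nhdsWithin (0:ℝ) (Set.Ioi 0), 0 < slope (fun η => w 0 η) 0 η :=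
    hsl.filter_mono (nhdsWithin_mono _ (fun z hz => ne_of_gt hz))
  have h01 : ∀ᶠ η in nhdsWithin (0:ℝ) (Set.Ioi 0), η ∈ Set.Ioo (0:ℝ) 1 := Ioo_mem_nhdsGT one_pos
  obtain ⟨η', h1, h2⟩ := (hsl2.and h01).exists
  have h00 : w 0 0 = 0 := by simp [hw]
  rw [slope_def_field, h00, sub_zero, sub_zero] at h1
  have := hle η' ⟨h2.1.le, h2.2.le⟩
  have := div_nonpos_of_nonpos_of_nonneg this h2.1.le
  linarith

theorem grad_bound {U a b r s t : ℝ → ℝ → ℝ} (D : C2data U a b r s t)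
    (hU : ∀ x y, |U x y| ≤ 1) {N : ℝ} (hN : ∀ x y, |r x y + t x y| ≤ N) (x y : ℝ) :
    |a x y| ≤ 2 + (N + 1) / 2 ∧ |b x y| ≤ 2 + (N + 1) / 2 := by
  have key : ∀ {U a b r s t : ℝ → ℝ → ℝ} (D : C2data U a b r s t)
    (hU : ∀ x y, |U x y| ≤ 1) (hN : ∀ x y, |r x y + t x y| ≤ N) (x y : ℝ),
      |b x y| ≤ 2 + (N + 1) / 2 := by
    intro U a b r s t D hU hN x y
    rw [abs_le]
    have h1 := grad_bound1 D hU hN x y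
    have h2 := grad_bound1 D.neg (by simpa using hU) (N := N) (by
      intro x y
      rw [← neg_add, abs_neg]; exact hN x y) x y
    constructor <;> linarith
  exact ⟨key D.swap (fun x y => hU y x) (fun x y => by rw [add_comm]; exact hN y x) y x, key D hU hN x y⟩

theorem dq_tendsto {w wx : ℝ → ℝ → ℝ} (h : ∀ x y, HasDerivAt (fun x => w x y) (wx x y) x)
    (hc : Continuous (fun p : ℝ × ℝ => wx p.1 p.2)) {X Y H : ℕ → ℝ} {x y : ℝ}
    (hX : Filter.Tendsto X Filter.atTop (nhds x)) (hY : Filter.Tendsto Y Filter.atTop (nhds y))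
    (hH : Filter.Tendsto H Filter.atTop (nhds 0)) (hpos : ∀ n, 0 < H n) :
    Filter.Tendsto (fun n => (w (X n + H n) (Y n) - w (X n) (Y n)) / H n) Filter.atTop
      (nhds (wx x y)) := by
  have : ∀ n, ∃ c ∈ Set.Ioo (X n) (X n + H n),
      wx c (Y n) = (w (X n + H n) (Y n) - w (X n) (Y n)) / H n := by
    intro n
    obtain ⟨c, h1, h2⟩ := exists_hasDerivAt_eq_slope (fun x => w x (Y n)) (fun x => wx x (Y n))
      (a := X n) (b := X n + H n) (by linarith [hpos n])
      (fun z _ => (h z (Y n)).continuousAt.continuousWithinAt) (fun z _ => h z (Y n))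
    refine ⟨c, h1, ?_⟩
    rw [h2]; congr 1; ring
  choose c hc1 hc2 using this
  have hcl : Filter.Tendsto c Filter.atTop (nhds x) := by
    refine tendsto_of_tendsto_of_tendsto_of_le_of_le hX (by simpa using hX.add hH)
      (fun n => (hc1 n).1.le) (fun n => (hc1 n).2.le)
  simp_rw [← hc2]
  exact (hc.tendsto (x, y)).comp (hcl.prodMk_nhds hY)

theorem dq_bound {w wx : ℝ → ℝ} (h : ∀ x, HasDerivAt w (wx x) x) {G : ℝ}
    (hG : ∀ x, |wx x| ≤ G) (x : ℝ) {H : ℝ} (hpos : 0 < H) :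
    |(w (x + H) - w x) / H| ≤ G := by
  obtain ⟨c, h1, h2⟩ := exists_hasDerivAt_eq_slope w wx
      (a := x) (b := x + H) (by linarith)
      (fun z _ => (h z).continuousAt.continuousWithinAt) (fun z _ => h z)
  have : (w (x + H) - w x) / H = wx c := by rw [h2]; congr 1; ring
  rw [this]; exact hG c

theorem line_max {v v' v'' z z' z'' q q' q'' Φ Φ1 Φ2 : ℝ → ℝ} {δ x0 k x : ℝ}
    (hv : ∀ x, HasDerivAt v (v' x) x) (hv' : ∀ x, HasDerivAt v' (v'' x) x)
    (hz : ∀ x, HasDerivAt z (z' x) x) (hz' : ∀ x, HasDerivAt z' (z'' x) x)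
    (hq : ∀ x, HasDerivAt q (q' x) x) (hq' : ∀ x, HasDerivAt q' (q'' x) x)
    (hΦ : ∀ x, HasDerivAt Φ (Φ1 x) x) (hΦ1 : ∀ x, HasDerivAt Φ1 (Φ2 x) x)
    (hm : IsLocalMax (fun x => v x ^ 2 + z x ^ 2 - 2 * Φ (q x) - δ * ((x - x0) ^ 2 + k)) x) :
    v x * v' x + z x * z' x - Φ1 (q x) * q' x = δ * (x - x0) ∧
    v' x ^ 2 + v x * v'' x + (z' x ^ 2 + z x * z'' x)
      - (Φ2 (q x) * q' x ^ 2 + Φ1 (q x) * q'' x) ≤ δ := by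
  have h1 : ∀ x, HasDerivAt (fun x => v x ^ 2 + z x ^ 2 - 2 * Φ (q x) - δ * ((x - x0) ^ 2 + k))
      (2 * (v x * v' x) + 2 * (z x * z' x) - 2 * (Φ1 (q x) * q' x) - 2 * δ * (x - x0)) x := by
    intro x
    have e1 := (hv x).pow 2
    have e2 := (hz x).pow 2
    have e3 := (((hΦ (q x)).comp x (hq x)).const_mul (2:ℝ))
    have e4 := (((((hasDerivAt_id x).sub_const x0).pow 2).add_const k).const_mul δ)
    refine HasDerivAt.congr_deriv (((e1.add e2).sub e3).sub e4) ?_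
    simp; ring
  have h2 : HasDerivAt (fun x => 2 * (v x * v' x) + 2 * (z x * z' x) - 2 * (Φ1 (q x) * q' x) - 2 * δ * (x - x0))
      (2 * (v' x ^ 2 + v x * v'' x + (z' x ^ 2 + z x * z'' x)
      - (Φ2 (q x) * q' x ^ 2 + Φ1 (q x) * q'' x)) - 2 * δ) x := by
    have e1 := ((hv x).mul (hv' x)).const_mul (2:ℝ)
    have e2 := ((hz x).mul (hz' x)).const_mul (2:ℝ)
    have e3 := ((((hΦ1 (q x)).comp x (hq x)).mul (hq' x)).const_mul (2:ℝ))
    have e4 := ((((hasDerivAt_id x).sub_const x0)).const_mul (2 * δ))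
    refine HasDerivAt.congr_deriv (((e1.add e2).sub e3).sub e4) ?_
    simp; ring
  have := max2 h1 h2 hm
  constructor <;> linarith [this.1, this.2]

set_option maxHeartbeats 1000000 in
theorem exists_point {U a b r s t : ℝ → ℝ → ℝ} (D : C2data U a b r s t)
    {f f2 : ℝ → ℝ} (hf : ∀ s, HasDerivAt f (f2 s) s) (hf2 : Continuous f2)
    (hpde : ∀ x y, r x y + t x y = f (U x y))
    {Φ Φ1 Φ2 : ℝ → ℝ} (hΦ : ∀ x, HasDerivAt Φ (Φ1 x) x) (hΦ1 : ∀ x, HasDerivAt Φ1 (Φ2 x) x)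
    (hΦ2 : Continuous Φ2) {G C : ℝ} (hG : ∀ x y, |a x y| ≤ G ∧ |b x y| ≤ G)
    (hC : ∀ x y, |Φ (U x y)| ≤ C) (x0 y0 : ℝ) {δ : ℝ} (hδ : 0 < δ) :
    ∃ x y, a x0 y0 ^ 2 + b x0 y0 ^ 2 - 2 * Φ (U x0 y0) ≤
        a x y ^ 2 + b x y ^ 2 - 2 * Φ (U x y) - δ * ((x - x0) ^ 2 + (y - y0) ^ 2) ∧
      a x y * r x y + b x y * s x y - Φ1 (U x y) * a x y = δ * (x - x0) ∧
      a x y * s x y + b x y * t x y - Φ1 (U x y) * b x y = δ * (y - y0) ∧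
      r x y ^ 2 + 2 * s x y ^ 2 + t x y ^ 2 + (f2 (U x y) - Φ2 (U x y)) * (a x y ^ 2 + b x y ^ 2)
        - Φ1 (U x y) * f (U x y) ≤ 2 * δ := by
  set d1 : (ℝ → ℝ → ℝ) → ℝ → ℝ → ℝ → ℝ := fun w h x y => (w (x + h) y - w x y) / h with hd1
  set d2 : (ℝ → ℝ → ℝ) → ℝ → ℝ → ℝ → ℝ := fun w h x y => (w x (y + h) - w x y) / h with hd2
  set K : ℝ → ℝ → ℝ → ℝ := fun h x y => d1 U h x y ^ 2 + d2 U h x y ^ 2 - 2 * Φ (U x y)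
    - δ * ((x - x0) ^ 2 + (y - y0) ^ 2) with hK
  have cΦ : Continuous Φ := continuous_iff_continuousAt.2 fun x => (hΦ x).continuousAt
  have cΦ1 : Continuous Φ1 := continuous_iff_continuousAt.2 fun x => (hΦ1 x).continuousAt
  -- derivative facts for difference quotients
  have x1 : ∀ {w wx : ℝ → ℝ → ℝ}, (∀ x y, HasDerivAt (fun x => w x y) (wx x y) x) →
      ∀ h x y, HasDerivAt (fun x => d1 w h x y) (d1 wx h x y) x := by
    intro w wx hw h x y
    exact (((hw (x + h) y).comp_add_const x h).sub (hw x y)).div_const h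
  have x2 : ∀ {w wx : ℝ → ℝ → ℝ}, (∀ x y, HasDerivAt (fun x => w x y) (wx x y) x) →
      ∀ h x y, HasDerivAt (fun x => d2 w h x y) (d2 wx h x y) x := by
    intro w wx hw h x y
    exact ((hw x (y + h)).sub (hw x y)).div_const h
  have y1 : ∀ {w wx : ℝ → ℝ → ℝ}, (∀ x y, HasDerivAt (fun y => w x y) (wx x y) y) →
      ∀ h x y, HasDerivAt (fun y => d1 w h x y) (d1 wx h x y) y := by
    intro w wx hw h x y
    exact ((hw (x + h) y).sub (hw x y)).div_const h
  have y2 : ∀ {w wx : ℝ → ℝ → ℝ}, (∀ x y, HasDerivAt (fun y => w x y) (wx x y) y) →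
      ∀ h x y, HasDerivAt (fun y => d2 w h x y) (d2 wx h x y) y := by
    intro w wx hw h x y
    exact (((hw x (y + h)).comp_add_const y h).sub (hw x y)).div_const h
  have cK : ∀ h, Continuous (fun p : ℝ × ℝ => K h p.1 p.2) := by
    intro h
    have c1 : Continuous (fun p : ℝ × ℝ => U (p.1 + h) p.2) :=
      D.cU.comp (f := fun p : ℝ × ℝ => (p.1 + h, p.2)) (by fun_prop)
    have c2 : Continuous (fun p : ℝ × ℝ => U p.1 (p.2 + h)) :=
      D.cU.comp (f := fun p : ℝ × ℝ => (p.1, p.2 + h)) (by fun_prop)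
    exact (((((c1.sub D.cU).div_const h).pow 2).add (((c2.sub D.cU).div_const h).pow 2)).sub
      ((cΦ.comp D.cU).const_mul 2)).sub (by fun_prop)
  have hG0 : 0 ≤ G := (abs_nonneg _).trans (hG 0 0).1
  have hC0 : 0 ≤ C := (abs_nonneg _).trans (hC 0 0)
  set R : ℝ := (2 * G ^ 2 + 4 * C) / δ + 1 with hR
  have hR1 : 1 ≤ R := by
    have : 0 ≤ (2 * G ^ 2 + 4 * C) / δ := by positivity
    linarith
  have hRδ : 2 * G ^ 2 + 4 * C < δ * R ^ 2 := by
    have : δ * R = 2 * G ^ 2 + 4 * C + δ := by rw [hR]; field_simp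
    nlinarith
  have hcpt : IsCompact (Set.Icc (x0 - R) (x0 + R) ×ˢ Set.Icc (y0 - R) (y0 + R)) :=
    isCompact_Icc.prod isCompact_Icc
  have hex : ∀ h, 0 < h → ∃ p ∈ (Set.Icc (x0 - R) (x0 + R) ×ˢ Set.Icc (y0 - R) (y0 + R)),
      ∀ x y, K h x y ≤ K h p.1 p.2 := by
    intro h hh
    obtain ⟨p, hp, hmax⟩ := hcpt.exists_isMaxOn ⟨(x0, y0), by
      simp only [Set.mem_prod, Set.mem_Icc]; refine ⟨⟨?_, ?_⟩, ?_, ?_⟩ <;> linarith⟩ (cK h).continuousOn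
    refine ⟨p, hp, fun x y => ?_⟩
    have hm0 : K h x0 y0 ≤ K h p.1 p.2 := hmax (a := (x0, y0)) (by
      simp only [Set.mem_prod, Set.mem_Icc]; refine ⟨⟨?_, ?_⟩, ?_, ?_⟩ <;> linarith)
    by_cases hxy : (x, y) ∈ (Set.Icc (x0 - R) (x0 + R) ×ˢ Set.Icc (y0 - R) (y0 + R))
    · exact hmax hxy
    · refine le_trans ?_ hm0
      have b1 : d1 U h x y ^ 2 ≤ G ^ 2 := by
        rw [sq_le_sq, abs_of_nonneg hG0]
        exact dq_bound (fun x => D.Ux x y) (fun x => (hG x y).1) x hh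
      have b2 : d2 U h x y ^ 2 ≤ G ^ 2 := by
        rw [sq_le_sq, abs_of_nonneg hG0]
        exact dq_bound (fun y => D.Uy x y) (fun y => (hG x y).2) y hh
      have b3 := abs_le.1 (hC x y)
      have b4 := abs_le.1 (hC x0 y0)
      have b5 : R ^ 2 ≤ (x - x0) ^ 2 + (y - y0) ^ 2 := by
        by_contra! hlt
        apply hxy
        have s1 : |x - x0| ≤ R := abs_le_of_sq_le_sq (by nlinarith [sq_nonneg (y - y0)]) (by linarith)
        have s2 : |y - y0| ≤ R := abs_le_of_sq_le_sq (by nlinarith [sq_nonneg (x - x0)]) (by linarith)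
        rw [abs_le] at s1 s2
        simp only [Set.mem_prod, Set.mem_Icc]; refine ⟨⟨?_, ?_⟩, ?_, ?_⟩ <;> linarith
      have b6 := mul_le_mul_of_nonneg_left b5 hδ.le
      have b7 : -2 * C ≤ K h x0 y0 := by
        simp only [hK]
        nlinarith [sq_nonneg (d1 U h x0 y0), sq_nonneg (d2 U h x0 y0)]
      have b8 : K h x y ≤ 2 * G ^ 2 + 2 * C - δ * R ^ 2 := by
        simp only [hK]
        linarith
      linarith
  set H : ℕ → ℝ := fun n => 1 / ((n : ℝ) + 1) with hH
  have hHpos : ∀ n, 0 < H n := fun n => by simp only [hH]; positivity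
  have hHlim : Filter.Tendsto H Filter.atTop (nhds 0) := tendsto_one_div_add_atTop_nhds_zero_nat
  choose p hp hpm using fun n => hex (H n) (hHpos n)
  obtain ⟨pl, -, φ, hφ, hlim⟩ := hcpt.tendsto_subseq hp
  obtain ⟨x, y⟩ := pl
  have hX : Filter.Tendsto (fun n => (p (φ n)).1) Filter.atTop (nhds x) :=
    (continuous_fst.tendsto _).comp hlim
  have hY : Filter.Tendsto (fun n => (p (φ n)).2) Filter.atTop (nhds y) :=
    (continuous_snd.tendsto _).comp hlim
  have hHφ : Filter.Tendsto (fun n => H (φ n)) Filter.atTop (nhds 0) := hHlim.comp hφ.tendsto_atTop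
  have L1 : ∀ {w wx : ℝ → ℝ → ℝ}, (∀ x y, HasDerivAt (fun x => w x y) (wx x y) x) →
      Continuous (fun p : ℝ × ℝ => wx p.1 p.2) →
      Filter.Tendsto (fun n => d1 w (H (φ n)) (p (φ n)).1 (p (φ n)).2) Filter.atTop (nhds (wx x y)) := by
    intro w wx hw hc
    exact dq_tendsto hw hc hX hY hHφ (fun n => hHpos _)
  have L2 : ∀ {w wx : ℝ → ℝ → ℝ}, (∀ x y, HasDerivAt (fun y => w x y) (wx x y) y) →
      Continuous (fun p : ℝ × ℝ => wx p.1 p.2) →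
      Filter.Tendsto (fun n => d2 w (H (φ n)) (p (φ n)).1 (p (φ n)).2) Filter.atTop (nhds (wx x y)) := by
    intro w wx hw hc
    exact dq_tendsto (w := fun x y => w y x) (wx := fun x y => wx y x) (fun x y => hw y x)
      (hc.comp continuous_swap) hY hX hHφ (fun n => hHpos _)
  have L0 : ∀ {w : ℝ → ℝ → ℝ}, Continuous (fun p : ℝ × ℝ => w p.1 p.2) →
      Filter.Tendsto (fun n => w (p (φ n)).1 (p (φ n)).2) Filter.atTop (nhds (w x y)) := by
    intro w hc
    exact (hc.tendsto (x, y)).comp hlim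
  have hmx := fun n => line_max (δ := δ) (x0 := x0) (k := ((p (φ n)).2 - y0) ^ 2) (x := (p (φ n)).1)
    (fun x => x1 D.Ux (H (φ n)) x (p (φ n)).2)
    (fun x => x1 D.ax (H (φ n)) x (p (φ n)).2) (fun x => x2 D.Ux (H (φ n)) x (p (φ n)).2)
    (fun x => x2 D.ax (H (φ n)) x (p (φ n)).2) (fun x => D.Ux x (p (φ n)).2)
    (fun x => D.ax x (p (φ n)).2) hΦ hΦ1
    (Filter.Eventually.of_forall fun x => hpm (φ n) x (p (φ n)).2)
  have hmy := fun n => line_max (δ := δ) (x0 := y0) (k := ((p (φ n)).1 - x0) ^ 2) (x := (p (φ n)).2)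
    (fun y => y1 D.Uy (H (φ n)) (p (φ n)).1 y)
    (fun y => y1 D.by' (H (φ n)) (p (φ n)).1 y) (fun y => y2 D.Uy (H (φ n)) (p (φ n)).1 y)
    (fun y => y2 D.by' (H (φ n)) (p (φ n)).1 y) (fun y => D.Uy (p (φ n)).1 y)
    (fun y => D.by' (p (φ n)).1 y) hΦ hΦ1
    (Filter.Eventually.of_forall fun y => by
      have := hpm (φ n) (p (φ n)).1 y
      simp only [hK] at this
      simpa only [add_comm] using this)
  have g1 : ∀ x y, HasDerivAt (fun x => f (U x y)) (f2 (U x y) * a x y) x := fun x y =>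
    (hf (U x y)).comp x (D.Ux x y)
  have g2 : ∀ x y, HasDerivAt (fun y => f (U x y)) (f2 (U x y) * b x y) y := fun x y =>
    (hf (U x y)).comp y (D.Uy x y)
  have lU1 := L1 D.Ux D.ca
  have lU2 := L2 D.Uy D.cb
  have la1 := L1 D.ax D.cr
  have la2 := L2 D.ay D.cs
  have lb1 := L1 D.bx D.cs
  have lb2 := L2 D.by' D.ct
  have lg1 := L1 (w := fun x y => f (U x y)) (wx := fun x y => f2 (U x y) * a x y) g1 ((hf2.comp D.cU).mul D.ca)
  have lg2 := L2 (w := fun x y => f (U x y)) (wx := fun x y => f2 (U x y) * b x y) g2 ((hf2.comp D.cU).mul D.cb)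
  have la := L0 D.ca
  have lb := L0 D.cb
  have lΦ := L0 (w := fun x y => Φ (U x y)) (cΦ.comp D.cU)
  have lΦ1 := L0 (w := fun x y => Φ1 (U x y)) (cΦ1.comp D.cU)
  have lΦ2 := L0 (w := fun x y => Φ2 (U x y)) (hΦ2.comp D.cU)
  have cf : Continuous f := continuous_iff_continuousAt.2 fun x => (hf x).continuousAt
  have lf := L0 (w := fun x y => f (U x y)) (cf.comp D.cU)
  refine ⟨x, y, ?_, ?_, ?_, ?_⟩
  · have l1 := (((lU1.pow 2).add (lU2.pow 2)).sub (lΦ.const_mul 2)).sub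
      (((((hX.sub_const x0).pow 2).add ((hY.sub_const y0).pow 2))).const_mul δ)
    have m1 := dq_tendsto D.Ux D.ca (tendsto_const_nhds (x := x0)) (tendsto_const_nhds (x := y0)) hHφ (fun n => hHpos _)
    have m2 := dq_tendsto D.swap.Ux D.swap.ca (tendsto_const_nhds (x := y0)) (tendsto_const_nhds (x := x0)) hHφ (fun n => hHpos _)
    have l2 := ((m1.pow 2).add (m2.pow 2)).sub_const (2 * Φ (U x0 y0))
    refine le_of_tendsto_of_tendsto' l2 l1 fun n => ?_
    have := hpm (φ n) x0 y0
    simp only [hK, hd1, hd2] at this ⊢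
    simpa using this
  · have l1 := ((lU1.mul la1).add (lU2.mul la2)).sub (lΦ1.mul la)
    exact tendsto_nhds_unique l1 (((hX.sub_const x0).const_mul δ).congr fun n => (hmx n).1.symm)
  · have l1 := ((lU1.mul lb1).add (lU2.mul lb2)).sub (lΦ1.mul lb)
    exact tendsto_nhds_unique l1 (((hY.sub_const y0).const_mul δ).congr fun n => (hmy n).1.symm)
  · have l1 := ((((((la1.pow 2).add (la2.pow 2)).add ((lb1.pow 2).add (lb2.pow 2))).add
      (lU1.mul lg1)).add (lU2.mul lg2)).sub (lΦ2.mul ((la.pow 2).add (lb.pow 2)))).sub (lΦ1.mul lf)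
    have := le_of_tendsto' (b := 2 * δ) l1 (fun n => by
      have e1 := (hmx n).2
      have e2 := (hmy n).2
      have E1 : d1 (fun x y => f (U x y)) (H (φ n)) (p (φ n)).1 (p (φ n)).2 =
          d1 r (H (φ n)) (p (φ n)).1 (p (φ n)).2 + d1 t (H (φ n)) (p (φ n)).1 (p (φ n)).2 := by
        simp only [hd1, ← hpde]; ring
      have E2 : d2 (fun x y => f (U x y)) (H (φ n)) (p (φ n)).1 (p (φ n)).2 =
          d2 r (H (φ n)) (p (φ n)).1 (p (φ n)).2 + d2 t (H (φ n)) (p (φ n)).1 (p (φ n)).2 := by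
        simp only [hd2, ← hpde]; ring
      rw [E1, E2, ← hpde]
      linarith)
    linarith

theorem ext_C2 {F : ℝ → ℝ} (hF : ContDiffOn ℝ 2 F (Set.Icc (-1) 1)) :
    ∃ Φ f f2 : ℝ → ℝ, (∀ s, HasDerivAt Φ (f s) s) ∧ (∀ s, HasDerivAt f (f2 s) s) ∧ Continuous f2 ∧
      (∀ s ∈ Set.Icc (-1 : ℝ) 1, Φ s = F s) ∧
      (∀ s ∈ Set.Icc (-1 : ℝ) 1, HasDerivWithinAt F (f s) (Set.Icc (-1) 1) s) := by
  have h11 : (-1 : ℝ) < 1 := by norm_num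
  have hud : UniqueDiffOn ℝ (Set.Icc (-1 : ℝ) 1) := uniqueDiffOn_Icc h11
  set I := Set.Icc (-1 : ℝ) 1 with hI
  have key : ∀ (g g' : ℝ → ℝ), (∀ s ∈ I, HasDerivWithinAt g (g' s) I s) → ∀ G' : ℝ → ℝ, Continuous G' →
      (∀ s ∈ I, G' s = g' s) → ∀ s ∈ I, g (-1) + ∫ x in (-1 : ℝ)..s, G' x = g s := by
    intro g g' hg G' hG' hE s hs
    have := intervalIntegral.integral_eq_sub_of_hasDeriv_right_of_le (f := g) (f' := G') (a := -1) (b := s) hs.1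
      (fun x hx => ((hg x ⟨hx.1, hx.2.trans hs.2⟩).continuousWithinAt).mono
        (Set.Icc_subset_Icc le_rfl hs.2))
      (fun x hx => by
        have hx' : x ∈ I := ⟨hx.1.le, hx.2.le.trans hs.2⟩
        rw [hE x hx']
        exact ((hg x hx').hasDerivAt (Icc_mem_nhds hx.1 (hx.2.trans_le hs.2))).hasDerivWithinAt)
      (hG'.intervalIntegrable _ _)
    rw [this]; ring
  have hd1 : ContDiffOn ℝ 1 (derivWithin F I) I := hF.derivWithin hud (by norm_num)
  have hc2 : ContinuousOn (derivWithin (derivWithin F I) I) I :=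
    hd1.continuousOn_derivWithin hud (by norm_num)
  set f2 : ℝ → ℝ := Set.IccExtend h11.le (I.domRestrict (derivWithin (derivWithin F I) I)) with hf2
  have cf2 : Continuous f2 := (continuousOn_iff_continuous_domRestrict.1 hc2).Icc_extend'
  have ef2 : ∀ s ∈ I, f2 s = derivWithin (derivWithin F I) I s := fun s hs => by
    rw [hf2, Set.IccExtend_of_mem _ _ hs]; rfl
  set f : ℝ → ℝ := fun s => derivWithin F I (-1) + ∫ x in (-1 : ℝ)..s, f2 x with hf
  have hfd : ∀ s, HasDerivAt f (f2 s) s := fun s =>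
    (intervalIntegral.integral_hasDerivAt_right (cf2.intervalIntegrable _ _)
      cf2.aestronglyMeasurable.stronglyMeasurableAtFilter cf2.continuousAt).const_add _
  have cf : Continuous f := continuous_iff_continuousAt.2 fun x => (hfd x).continuousAt
  have ef : ∀ s ∈ I, f s = derivWithin F I s := fun s hs =>
    key _ _ (fun s hs => (hd1.differentiableOn (by norm_num) s hs).hasDerivWithinAt) f2 cf2 ef2 s hs
  refine ⟨fun s => F (-1) + ∫ x in (-1 : ℝ)..s, f x, f, f2, fun s =>
    (intervalIntegral.integral_hasDerivAt_right (cf.intervalIntegrable _ _)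
      cf.aestronglyMeasurable.stronglyMeasurableAtFilter cf.continuousAt).const_add _, hfd, cf2, ?_, ?_⟩
  · exact fun s hs => key _ _ (fun s hs => (hF.differentiableOn (by norm_num) s hs).hasDerivWithinAt) f cf ef s hs
  · intro s hs
    rw [ef s hs]
    exact (hF.differentiableOn (by norm_num) s hs).hasDerivWithinAt

theorem alg_step {a b r s t f Φ1 w W2 ρ1 ρ2 δ : ℝ} (ht : r + t = f) (hw : Φ1 = f - w)
    (h1 : a * r + b * s - Φ1 * a = ρ1) (h2 : a * s + b * t - Φ1 * b = ρ2)
    (h3 : r ^ 2 + 2 * s ^ 2 + t ^ 2 + W2 * (a ^ 2 + b ^ 2) - Φ1 * f ≤ 2 * δ) :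
    (a ^ 2 + b ^ 2) * (W2 * (a ^ 2 + b ^ 2) - f * w) ≤
      2 * δ * (a ^ 2 + b ^ 2) - (4 * Φ1 - 2 * f) * (ρ1 * a + ρ2 * b) := by
  have h4 := mul_le_mul_of_nonneg_left h3 (by positivity : 0 ≤ a ^ 2 + b ^ 2)
  have id : (a ^ 2 + b ^ 2) * (r ^ 2 + 2 * s ^ 2 + t ^ 2) =
    (a ^ 2 + b ^ 2) * (f ^ 2 + 2 * Φ1 ^ 2 - 2 * f * Φ1) + (4 * Φ1 - 2 * f) * (ρ1 * a + ρ2 * b)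
      + 2 * (ρ1 ^ 2 + ρ2 ^ 2) := by
    rw [← h1, ← h2, ← ht]; ring
  have h5 : (a ^ 2 + b ^ 2) * (f ^ 2 + 2 * Φ1 ^ 2 - 3 * f * Φ1) =
    (a ^ 2 + b ^ 2) * (2 * w ^ 2 - f * w) := by rw [hw]; ring
  have h6 : 0 ≤ (a ^ 2 + b ^ 2) * (2 * w ^ 2) := by positivity
  nlinarith [sq_nonneg ρ1, sq_nonneg ρ2]

theorem final_alg {a b r s t F f f2 E E1 E2 K M ε N G C τ X Y c B : ℝ} (ht : r + t = f)
    (h1 : a * r + b * s - (f - ε * E) * a = τ ^ 2 * X)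
    (h2 : a * s + b * t - (f - ε * E) * b = τ ^ 2 * Y)
    (h3 : r ^ 2 + 2 * s ^ 2 + t ^ 2 + (f2 - (f2 - ε * (K * E))) * (a ^ 2 + b ^ 2)
      - (f - ε * E) * f ≤ 2 * τ ^ 2)
    (hτ : 0 < τ) (hM : 0 < M) (hK : 0 < K) (hε : 0 < ε) (hN0 : 0 ≤ N) (hG0 : 0 ≤ G) (hC0 : 0 ≤ C)
    (hKM : K * M = 2 * (N + 1)) (hεK : ε / K * E2 = M / 4) (hE : 0 < E) (hE1 : E1 ≤ E) (hE2 : E ≤ E2)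
    (hf : |f| ≤ N) (hC : |F - ε / K * E| ≤ C) (hF : 0 ≤ F) (ha : |a| ≤ G) (hb : |b| ≤ G)
    (hmain : M ≤ a ^ 2 + b ^ 2 - 2 * (F - ε / K * E) - τ ^ 2 * (X ^ 2 + Y ^ 2))
    (hc : c = ε * E1) (hB : B = (4 * (N + ε * E2) + 2 * N) * (2 * G) * (2 / M)) :
    c ≤ 2 * τ ^ 2 + B * (τ * (2 * G ^ 2 + 2 * C + 1)) := by
  have hstep := alg_step (δ := τ ^ 2) (W2 := ε * (K * E)) ht rfl h1 h2 (by linarith [h3])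
  obtain ⟨S, hS⟩ : ∃ S, S = τ * (2 * G ^ 2 + 2 * C + 1) := ⟨_, rfl⟩
  have hS0 : 0 ≤ S := by rw [hS]; positivity
  obtain ⟨Q, hQ⟩ : ∃ Q, Q = 4 * (N + ε * E2) + 2 * N := ⟨_, rfl⟩
  have hE20 : 0 < E2 := hE.trans_le hE2
  have hQ0 : 0 ≤ Q := by rw [hQ]; positivity
  have a2 : a ^ 2 ≤ G ^ 2 := by rw [sq_le_sq, abs_of_nonneg hG0]; exact ha
  have b2 : b ^ 2 ≤ G ^ 2 := by rw [sq_le_sq, abs_of_nonneg hG0]; exact hb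
  have hεE : ε / K * E ≤ M / 4 := by
    rw [← hεK]; exact mul_le_mul_of_nonneg_left hE2 (by positivity)
  obtain ⟨g, hg⟩ : ∃ g, g = a ^ 2 + b ^ 2 := ⟨_, rfl⟩
  have hXY : 0 ≤ τ ^ 2 * (X ^ 2 + Y ^ 2) := by positivity
  have hgM : M / 2 ≤ g := by rw [hg]; linarith
  have hC' := abs_le.1 hC
  have hXY2 : τ ^ 2 * (X ^ 2 + Y ^ 2) ≤ 2 * G ^ 2 + 2 * C := by linarith
  have hT : 0 ≤ 2 * G ^ 2 + 2 * C := by positivity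
  have aux : ∀ Z : ℝ, τ ^ 2 * Z ^ 2 ≤ 2 * G ^ 2 + 2 * C → |τ ^ 2 * Z| ≤ S := by
    intro Z hZ
    apply abs_le_of_sq_le_sq _ hS0
    have e1 : (τ ^ 2 * Z) ^ 2 = τ ^ 2 * (τ ^ 2 * Z ^ 2) := by ring
    have e2 : S ^ 2 = τ ^ 2 * (2 * G ^ 2 + 2 * C + 1) ^ 2 := by rw [hS]; ring
    rw [e1, e2]
    refine mul_le_mul_of_nonneg_left (hZ.trans ?_) (by positivity)
    generalize 2 * G ^ 2 + 2 * C = T at hT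
    clear * - hT
    nlinarith
  have hρ1 := aux X (by linarith [mul_nonneg (sq_nonneg τ) (sq_nonneg Y)])
  have hρ2 := aux Y (by linarith [mul_nonneg (sq_nonneg τ) (sq_nonneg X)])
  have hdot : |τ ^ 2 * X * a + τ ^ 2 * Y * b| ≤ 2 * G * S := by
    refine (abs_add_le _ _).trans ?_
    rw [abs_mul _ a, abs_mul _ b]
    have := mul_le_mul hρ1 ha (abs_nonneg _) hS0
    have := mul_le_mul hρ2 hb (abs_nonneg _) hS0
    linarith
  have hcoef : |4 * (f - ε * E) - 2 * f| ≤ Q := by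
    have := abs_le.1 hf
    have h7 : ε * E ≤ ε * E2 := mul_le_mul_of_nonneg_left hE2 hε.le
    have h8 : 0 ≤ ε * E := by positivity
    rw [abs_le, hQ]; constructor <;> linarith
  have herr : |(4 * (f - ε * E) - 2 * f) * (τ ^ 2 * X * a + τ ^ 2 * Y * b)| ≤ Q * (2 * G * S) := by
    rw [abs_mul]
    exact mul_le_mul hcoef hdot (abs_nonneg _) hQ0
  have herr2 := (abs_le.1 herr).1
  rw [← hg] at hstep
  have hlow : c ≤ ε * (K * E) * g - f * (ε * E) := by
    have h9 : 1 ≤ K * g - f := by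
      have := abs_le.1 hf
      have := mul_le_mul_of_nonneg_left hgM hK.le
      linarith
    have h10 : ε * E1 ≤ ε * E := mul_le_mul_of_nonneg_left hE1 hε.le
    have h11 := mul_le_mul_of_nonneg_left h9 (by positivity : 0 ≤ ε * E)
    rw [hc]; linarith
  have hg0 : 0 < g := by linarith
  have h12 := mul_le_mul_of_nonneg_left hlow hg0.le
  have h13 : Q * (2 * G * S) ≤ g * (B * S) := by
    have : Q * (2 * G * S) = (M / 2) * (B * S) := by rw [hB, hQ]; field_simp
    rw [this]
    have hB0 : 0 ≤ B := by rw [hB, ← hQ]; positivity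
    exact mul_le_mul_of_nonneg_right hgM (by positivity)
  rw [← hS]
  refine le_of_mul_le_mul_left ?_ hg0
  linarith

set_option maxHeartbeats 1000000 in
theorem modica_core {U a b r s t : ℝ → ℝ → ℝ} (D : C2data U a b r s t)
    (hU : ∀ x y, |U x y| ≤ 1)
    {F f f2 : ℝ → ℝ} (hF : ∀ s, HasDerivAt F (f s) s) (hf : ∀ s, HasDerivAt f (f2 s) s)
    (hf2 : Continuous f2) (hpos : ∀ s ∈ Set.Icc (-1 : ℝ) 1, 0 ≤ F s)
    (hpde : ∀ x y, r x y + t x y = f (U x y)) (x0 y0 : ℝ) :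
    a x0 y0 ^ 2 + b x0 y0 ^ 2 ≤ 2 * F (U x0 y0) := by
  by_contra! hcon
  obtain ⟨M, hM⟩ : ∃ M, M = a x0 y0 ^ 2 + b x0 y0 ^ 2 - 2 * F (U x0 y0) := ⟨_, rfl⟩
  have hM0 : 0 < M := by linarith
  have cf : Continuous f := continuous_iff_continuousAt.2 fun x => (hf x).continuousAt
  have cF : Continuous F := continuous_iff_continuousAt.2 fun x => (hF x).continuousAt
  have hUI : ∀ x y, U x y ∈ Set.Icc (-1 : ℝ) 1 := fun x y => abs_le.1 (hU x y)
  obtain ⟨N, hN⟩ := (isCompact_Icc (a := (-1 : ℝ)) (b := 1)).exists_bound_of_continuousOn cf.continuousOn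
  simp only [Real.norm_eq_abs] at hN
  have hN0 : 0 ≤ N := (abs_nonneg _).trans (hN 0 (by simp))
  obtain ⟨G, hG⟩ : ∃ G, ∀ x y, |a x y| ≤ G ∧ |b x y| ≤ G :=
    ⟨_, grad_bound D hU (N := N) fun x y => by rw [hpde]; exact hN _ (hUI x y)⟩
  have hG0 : 0 ≤ G := (abs_nonneg _).trans (hG 0 0).1
  obtain ⟨K, hK⟩ : ∃ K, K = 2 * (N + 1) / M := ⟨_, rfl⟩
  have hK0 : 0 < K := by rw [hK]; positivity
  have hKM : K * M = 2 * (N + 1) := by rw [hK]; field_simp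
  obtain ⟨ε, hε⟩ : ∃ ε, ε = K * M / 4 * exp (-K) := ⟨_, rfl⟩
  have hε0 : 0 < ε := by rw [hε]; positivity
  obtain ⟨c, hc⟩ : ∃ c, c = ε * exp (-K) := ⟨_, rfl⟩
  have hc0 : 0 < c := by rw [hc]; positivity
  have dexp : ∀ s : ℝ, HasDerivAt (fun s => exp (K * s)) (K * exp (K * s)) s := fun s => by
    refine HasDerivAt.congr_deriv (((hasDerivAt_id s).const_mul K).exp) ?_
    simp; ring
  have hΦ : ∀ s, HasDerivAt (fun s => F s - ε / K * exp (K * s)) (f s - ε * exp (K * s)) s := fun s => by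
    refine HasDerivAt.congr_deriv ((hF s).sub ((dexp s).const_mul (ε / K))) ?_
    field_simp
  have hΦ1 : ∀ s, HasDerivAt (fun s => f s - ε * exp (K * s)) (f2 s - ε * (K * exp (K * s))) s := fun s =>
    (hf s).sub ((dexp s).const_mul ε)
  have hΦ2 : Continuous (fun s => f2 s - ε * (K * exp (K * s))) := by fun_prop
  obtain ⟨C, hC⟩ := (isCompact_Icc (a := (-1 : ℝ)) (b := 1)).exists_bound_of_continuousOn
    (f := fun s => F s - ε / K * exp (K * s)) (by fun_prop)
  simp only [Real.norm_eq_abs] at hC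
  have hC0 : 0 ≤ C := (abs_nonneg _).trans (hC 0 (by simp))
  obtain ⟨B, hB⟩ : ∃ B, B = (4 * (N + ε * exp K) + 2 * N) * (2 * G) * (2 / M) := ⟨_, rfl⟩
  have hB0 : 0 ≤ B := by rw [hB]; positivity
  have main : ∀ τ : ℝ, 0 < τ → c ≤ 2 * τ ^ 2 + B * (τ * (2 * G ^ 2 + 2 * C + 1)) := by
    intro τ hτ
    have hδ : 0 < τ ^ 2 := by positivity
    obtain ⟨x, y, p1, p2, p3, p4⟩ := exists_point D hf hf2 hpde hΦ hΦ1 hΦ2 hG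
      (fun x y => hC _ (hUI x y)) x0 y0 hδ
    have hI := hUI x y
    have bf := abs_le.1 (hN _ hI)
    have bC := abs_le.1 (hC _ hI)
    have bFp := hpos _ hI
    have bC0 := hC _ (hUI x0 y0)
    have gb := hG x y
    have hE1 : exp (-K) ≤ exp (K * U x y) := exp_le_exp.2 (by linarith [mul_le_mul_of_nonneg_left hI.1 hK0.le])
    have hE2 : exp (K * U x y) ≤ exp K := exp_le_exp.2 (by linarith [mul_le_mul_of_nonneg_left hI.2 hK0.le])
    have hεK : ε / K * exp K = M / 4 := by
      rw [hε]
      have : exp (-K) * exp K = 1 := by rw [← exp_add]; simp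
      field_simp
      linear_combination this
    have hE0 : 0 ≤ ε / K * exp (K * U x0 y0) := by positivity
    refine final_alg (hpde x y) p2 p3 p4 hτ hM0 hK0 hε0 hN0 hG0 hC0 hKM hεK (exp_pos _) hE1 hE2
      (hN _ hI) (hC _ hI) bFp gb.1 gb.2 ?_ hc hB
    linarith
  have hlim : Filter.Tendsto (fun τ : ℝ => 2 * τ ^ 2 + B * (τ * (2 * G ^ 2 + 2 * C + 1)))
      (nhdsWithin 0 (Set.Ioi 0)) (nhds 0) := by
    have : Continuous (fun τ : ℝ => 2 * τ ^ 2 + B * (τ * (2 * G ^ 2 + 2 * C + 1))) := by fun_prop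
    have h := this.tendsto 0
    simp only [ne_eq, OfNat.ofNat_ne_zero, not_false_eq_true, zero_pow, mul_zero, zero_mul, add_zero] at h
    exact h.mono_left nhdsWithin_le_nhds
  have := ge_of_tendsto hlim (b := c) (by
    filter_upwards [self_mem_nhdsWithin] with τ hτ using main τ hτ)
  linarith

theorem exists_data {u : ℝ → ℝ → ℝ} (hu : ContDiff ℝ 2 (fun p : ℝ × ℝ => u p.1 p.2)) :
    ∃ a b r s t : ℝ → ℝ → ℝ, C2data u a b r s t := by
  have px : ∀ {w : ℝ × ℝ → ℝ}, Differentiable ℝ w → ∀ x y,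
      HasDerivAt (fun x => w (x, y)) (fderiv ℝ w (x, y) (1, 0)) x := by
    intro w hw x y
    exact (hw (x, y)).hasFDerivAt.comp_hasDerivAt x ((hasDerivAt_id x).prodMk (hasDerivAt_const x y))
  have py : ∀ {w : ℝ × ℝ → ℝ}, Differentiable ℝ w → ∀ x y,
      HasDerivAt (fun y => w (x, y)) (fderiv ℝ w (x, y) (0, 1)) y := by
    intro w hw x y
    exact (hw (x, y)).hasFDerivAt.comp_hasDerivAt y ((hasDerivAt_const y x).prodMk (hasDerivAt_id y))
  set U : ℝ × ℝ → ℝ := fun p => u p.1 p.2 with hU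
  have hd : ContDiff ℝ 1 (fderiv ℝ U) := hu.fderiv_right (by norm_num)
  have he : ∀ e : ℝ × ℝ, ContDiff ℝ 1 (fun p => fderiv ℝ U p e) := fun e => hd.clm_apply contDiff_const
  have hee : ∀ e e' : ℝ × ℝ, Continuous (fun p => fderiv ℝ (fun p => fderiv ℝ U p e) p e') := fun e e' =>
    ((he e).continuous_fderiv (by norm_num)).clm_apply continuous_const
  have hdd : ∀ e, Differentiable ℝ (fun p => fderiv ℝ U p e) := fun e => (he e).differentiable (by norm_num)
  have hUd : Differentiable ℝ U := hu.differentiable (by norm_num)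
  have hsymm : ∀ p (e e' : ℝ × ℝ), fderiv ℝ (fun p => fderiv ℝ U p e) p e' = fderiv ℝ (fun p => fderiv ℝ U p e') p e := by
    intro p e e'
    have k : ∀ e e' : ℝ × ℝ, fderiv ℝ (fun p => fderiv ℝ U p e) p e' = fderiv ℝ (fderiv ℝ U) p e' e := by
      intro e e'
      rw [fderiv_clm_apply ((hd.differentiable (by norm_num)) p) (by fun_prop)]
      simp
    rw [k, k]
    have : IsSymmSndFDerivAt ℝ U p := (hu.contDiffAt).isSymmSndFDerivAt (by simp)
    exact this _ _
  refine ⟨fun x y => fderiv ℝ U (x, y) (1, 0), fun x y => fderiv ℝ U (x, y) (0, 1),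
    fun x y => fderiv ℝ (fun p => fderiv ℝ U p (1, 0)) (x, y) (1, 0),
    fun x y => fderiv ℝ (fun p => fderiv ℝ U p (1, 0)) (x, y) (0, 1),
    fun x y => fderiv ℝ (fun p => fderiv ℝ U p (0, 1)) (x, y) (0, 1), ?_⟩
  exact
  { Ux := fun x y => px hUd x y
    Uy := fun x y => py hUd x y
    ax := fun x y => px (hdd (1, 0)) x y
    ay := fun x y => py (hdd (1, 0)) x y
    bx := fun x y => by
      rw [hsymm]; exact px (hdd (0, 1)) x y
    by' := fun x y => py (hdd (0, 1)) x y
    cU := hu.continuous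
    ca := (he (1, 0)).continuous
    cb := (he (0, 1)).continuous
    cr := hee _ _
    cs := hee _ _
    ct := hee _ _ }

theorem stmt_2
    (F : ℝ → ℝ) (u : ℝ → ℝ → ℝ)
    (hF : ContDiffOn ℝ 2 F (Set.Icc (-1) 1))
    (hFnonneg : ∀ s ∈ Set.Icc (-1 : ℝ) 1, 0 ≤ F s)
    (hu : ContDiff ℝ 2 (fun p : ℝ × ℝ => u p.1 p.2))
    (hub : ∀ x y : ℝ, |u x y| ≤ 1)
    (hpde : ∀ x y : ℝ,
      deriv (deriv (fun t => u t y)) x + deriv (deriv (u x)) y = deriv F (u x y)) :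
    ∀ x y : ℝ,
      (deriv (fun t => u t y) x) ^ 2 + (deriv (u x) y) ^ 2 ≤ 2 * F (u x y) := by
  obtain ⟨a, b, r, s, t, D⟩ := exists_data hu
  have ea : ∀ y, deriv (fun t => u t y) = fun x => a x y := fun y => funext fun x => (D.Ux x y).deriv
  have eb : ∀ x, deriv (u x) = fun y => b x y := fun x => funext fun y => (D.Uy x y).deriv
  have hpde' : ∀ x y, r x y + t x y = deriv F (u x y) := by
    intro x y
    rw [← hpde x y, ea, eb, (D.ax x y).deriv, (D.by' x y).deriv]
  obtain ⟨Φ, f, f2, hΦ, hf, hf2, hΦF, hfF⟩ := ext_C2 hF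
  have hUI : ∀ x y, u x y ∈ Set.Icc (-1 : ℝ) 1 := fun x y => abs_le.1 (hub x y)
  intro x y
  rw [ea, eb]
  by_cases hall : ∀ x y, r x y + t x y = f (u x y)
  · rw [← hΦF _ (hUI x y)]
    exact modica_core D hub hΦ hf hf2 (fun s hs => by rw [hΦF s hs]; exact hFnonneg s hs) hall x y
  · push Not at hall
    obtain ⟨x1, y1, h1⟩ := hall
    have cf : Continuous f := continuous_iff_continuousAt.2 fun x => (hf x).continuousAt
    set O : Set (ℝ × ℝ) := {p | r p.1 p.2 + t p.1 p.2 ≠ f (u p.1 p.2)} with hO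
    have hOo : IsOpen O := isOpen_ne_fun (D.cr.add D.ct) (cf.comp D.cU)
    have hOv : ∀ p ∈ O, u p.1 p.2 = 1 ∨ u p.1 p.2 = -1 := by
      intro p hp
      by_contra! hne
      apply hp
      rw [hpde']
      have hI := hUI p.1 p.2
      exact ((hfF _ hI).hasDerivAt (Icc_mem_nhds (lt_of_le_of_ne hI.1 hne.2.symm)
        (lt_of_le_of_ne hI.2 hne.1))).deriv
    set S : Set (ℝ × ℝ) := {p | u p.1 p.2 = u x1 y1} with hS
    have hSO : S ⊆ O := by
      intro p hp
      have hp' : u p.1 p.2 = u x1 y1 := hp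
      change r p.1 p.2 + t p.1 p.2 ≠ f (u p.1 p.2)
      rw [hpde', hp', ← hpde']
      exact h1
    have hSc : IsClosed S := isClosed_eq D.cU continuous_const
    have hSeq : S = O ∩ {p | |u p.1 p.2 - u x1 y1| < 1} := by
      ext p
      constructor
      · intro hp
        refine ⟨hSO hp, ?_⟩
        have hp' : u p.1 p.2 = u x1 y1 := hp
        simp [hp']
      · rintro ⟨hp, hlt⟩
        have hlt' : |u p.1 p.2 - u x1 y1| < 1 := hlt
        change u p.1 p.2 = u x1 y1
        rw [abs_lt] at hlt'
        rcases hOv p hp with e | e <;> rcases hOv (x1, y1) h1 with e' | e' <;>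
          simp only at e' <;> rw [e, e'] at hlt' ⊢ <;> norm_num at hlt'
    have hSo : IsOpen S := by
      rw [hSeq]
      exact hOo.inter (isOpen_lt ((D.cU.sub continuous_const).abs) continuous_const)
    have hSu : S = Set.univ := IsClopen.eq_univ ⟨hSc, hSo⟩ ⟨(x1, y1), rfl⟩
    have hconst : ∀ x y, u x y = u x1 y1 := fun x y => by
      have : (x, y) ∈ S := by rw [hSu]; trivial
      exact this
    have a0 : a x y = 0 := by
      rw [← (D.Ux x y).deriv]; simp [hconst]
    have b0 : b x y = 0 := by
      rw [← (D.Uy x y).deriv]; simp [hconst]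
    simp only [a0, b0]
    have := hFnonneg _ (hUI x y)
    nlinarith
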